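/- Existential guardedness does not imply universal guardedness: for the two-clause logic program P₇ with clauses 0: p(s(X1),X2,Y1,Y2) ← q(X2,X2,Y1,Y2) and 1: q(X1,X2,s(Y1),Y2) ← p(X1,X2,Y2,Y2) (where p and q are 4-ary predicate symbols and s is a unary function symbol), the rewriting trees for P₇ and each clause head p(s(X1),X2,Y1,Y2) and q(X1,X2,s(Y1),Y2) contain no loops at all (hence are guarded), yet the rewriting tree for P₇ and the atom p(s(X1),s(X2),s(Y1),s(Y2)) is infinite; in particular P₇ is not universally observable. -/

import Mathlib

/-!
Rewriting by matching never instantiates the atom being rewritten. Starting from the head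
`p(s(X1),X2,Y1,Y2)` one step leads to `q(X2,X2,Y1,Y2)`, where clause 1 would need `Y1` to be
of the form `s(_)`; starting from `q(X1,X2,s(Y1),Y2)` one step leads to `p(X1,X2,Y2,Y2)`,
where clause 0 would need `X1` to be of the form `s(_)`. So both trees stop after one step
(`no_depth_three_head7p`, `no_depth_three_head7q`), while a loop requires two nonempty
and-nodes on one branch, i.e. depth at least four (`not_hasLoopAt_of_depth`).

In `p(s(X1),s(X2),s(Y1),s(Y2))` every argument already has the form `s(_)`, and the clause
bodies only use arguments that the heads copy unchanged. Hence every descendant again has all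
arguments of the form `s(_)`, and the two clauses apply alternately forever (`exists_node`).
Refuting universal observability also requires that some rewriting tree for this atom exists;
it is the single infinite branch `badTree` (`isRewritingTree_badTree`). For existence of or-nodes
one needs matchers that are most general among substitutions on *all* variables, which is
achieved by acting as the identity outside the head variables (`subst4_mostGeneral`).
-/

/- A formalization of the framework of Komendantskaya, Johann, Schmidt,
   "A Productivity Checker for Logic Programming". -/

namespace LPProd

/-- A first-order signature: finitely many function symbols (with arities)
    and finitely many predicate symbols (with arities). Variables are `ℕ`. -/
structure Signature where
  Fn : Type
  fnFinite : Finite Fn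
  fnArity : Fn → ℕ
  Pred : Type
  predFinite : Finite Pred
  predArity : Pred → ℕ

/-- Symbols occurring as node labels of term trees: variables, function
    symbols (constants are nullary function symbols), predicate symbols. -/
inductive Sym (S : Signature) : Type
  | var : ℕ → Sym S
  | fn : S.Fn → Sym S
  | pred : S.Pred → Sym S

/-- Finite trees labelled by symbols; terms and atoms are such trees. -/
inductive STree (S : Signature) : Type
  | node : Sym S → List (STree S) → STree S

variable (S : Signature)

/-- The root symbol `t(ε)` of a tree. -/
def STree.rootSym : STree S → Sym S
  | .node l _ => l

/-- A node is a leaf if it has no children (variables and constants). -/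
def STree.isLeaf : STree S → Prop
  | .node _ ts => ts = []

/-- `SubtermAt t w u`: `u` is the subterm of `t` at position `w ∈ ℕ*`. -/
inductive SubtermAt : STree S → List ℕ → STree S → Prop
  | refl (t : STree S) : SubtermAt t [] t
  | step {l : Sym S} {ts : List (STree S)} {i : ℕ} {t u : STree S} {w : List ℕ} :
      ts[i]? = some t → SubtermAt t w u → SubtermAt (.node l ts) (i :: w) u

/-- `t` is a term tree over the signature. -/
inductive IsTermTree : STree S → Prop
  | var (v : ℕ) : IsTermTree (.node (.var v) [])
  | fn (f : S.Fn) (ts : List (STree S)) :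
      (∀ t ∈ ts, IsTermTree t) → ts.length = S.fnArity f →
      IsTermTree (.node (.fn f) ts)

/-- `A` is an atom: a predicate symbol applied to terms. -/
def IsAtomTree (A : STree S) : Prop :=
  ∃ p ts, A = .node (.pred p) ts ∧ ts.length = S.predArity p ∧
    ∀ t ∈ ts, IsTermTree S t

/-- Substitutions map variables to trees. -/
abbrev Subst := ℕ → STree S

mutual
  /-- Applying a substitution to a tree. -/
  def STree.subst (σ : Subst S) : STree S → STree S
    | .node (.var v) _ => σ v
    | .node (.fn f) ts => .node (.fn f) (substList σ ts)
    | .node (.pred p) ts => .node (.pred p) (substList σ ts)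
  def substList (σ : Subst S) : List (STree S) → List (STree S)
    | [] => []
    | t :: ts => STree.subst σ t :: substList σ ts
end

/-- Composition of substitutions: `(ρ ∘ σ)(v) = ρ(σ(v))`. -/
def Subst.comp (ρ σ : Subst S) : Subst S := fun v => (σ v).subst S ρ

/-- `σ` is a matcher of `t` against `u`: `σ(t) = u`. -/
def IsMatcher (σ : Subst S) (t u : STree S) : Prop := t.subst S σ = u

/-- `σ` is a unifier of `t` and `u`: `σ(t) = σ(u)`. -/
def IsUnifier (σ : Subst S) (t u : STree S) : Prop := t.subst S σ = u.subst S σ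

/-- `σ` is a most general matcher (mgm) of `t` against `u`. -/
def IsMGM (σ : Subst S) (t u : STree S) : Prop :=
  IsMatcher S σ t u ∧ ∀ τ, IsMatcher S τ t u → ∃ ρ, τ = Subst.comp S ρ σ

/-- `σ` is a most general unifier (mgu) of `t` and `u`. -/
def IsMGU (σ : Subst S) (t u : STree S) : Prop :=
  IsUnifier S σ t u ∧ ∀ τ, IsUnifier S τ t u → ∃ ρ, τ = Subst.comp S ρ σ

/-- `ContainsSym t s`: the symbol `s` occurs somewhere in `t`. -/
def ContainsSym (t : STree S) (s : Sym S) : Prop :=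
  ∃ w u, SubtermAt S t w u ∧ u.rootSym = s

/-- `t₂` is a contraction of `t₁` (`t₁ ▷ t₂`) witnessed at position `w`:
    `t₂(w)` is a leaf, `t₁(w)` is not a leaf, and the branches to `w` in
    `t₁` and `t₂` are identical up to node `w`.  The reducing subterm is
    `subterm(t₁,w)`. -/
def ContractionAt (t₁ t₂ : STree S) (w : List ℕ) : Prop :=
  (∃ u₂, SubtermAt S t₂ w u₂ ∧ u₂.isLeaf) ∧
  (∃ u₁, SubtermAt S t₁ w u₁ ∧ ¬ u₁.isLeaf) ∧
  (∀ v, v <+: w → v ≠ w → ∀ u₁ u₂, SubtermAt S t₁ v u₁ → SubtermAt S t₂ v u₂ →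
      u₁.rootSym = u₂.rootSym)

/-- `t₁ ▷ t₂`: `t₂` is a contraction of `t₁`. -/
def Contraction (t₁ t₂ : STree S) : Prop := ∃ w, ContractionAt S t₁ t₂ w

/-- A recursive contraction at `w`: in addition, `subterm(t₁,w)` contains
    the symbol `t₂(w)`. -/
def RecContractionAt (t₁ t₂ : STree S) (w : List ℕ) : Prop :=
  ContractionAt S t₁ t₂ w ∧
  ∃ u₁ u₂, SubtermAt S t₁ w u₁ ∧ SubtermAt S t₂ w u₂ ∧ ContainsSym S u₁ u₂.rootSym

/-- A variable contraction at `w`: `t₂(w)` is a variable. -/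
def VarContractionAt (t₁ t₂ : STree S) (w : List ℕ) : Prop :=
  ContractionAt S t₁ t₂ w ∧
  ∃ u₂ n, SubtermAt S t₂ w u₂ ∧ u₂.rootSym = Sym.var n

/-- A Horn clause `A ← B₁,…,Bₙ`. -/
structure Clause (S : Signature) where
  head : STree S
  body : List (STree S)

/-- A logic program: a finite list of Horn clauses; `P[i]?` is `P(i)`. -/
abbrev Program := List (Clause S)

/-- A (possibly infinite) and-or rewriting tree, presented as a tree
    language of node positions together with labelling functions.
    And-nodes sit at even depth (labelled by atoms), or-nodes at odd depth
    (labelled by clause indices).  An and-node `w` has its or-node children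
    indexed by the clause numbers used, i.e. the child `w ++ [i]`
    corresponds to clause `P(i)`. -/
structure RTree (S : Signature) where
  dom : Set (List ℕ)
  andLabel : List ℕ → STree S
  orLabel : List ℕ → ℕ

/-- `T` is the rewriting tree for program `P` and atom `A`. -/
structure IsRewritingTree (P : Program S) (A : STree S) (T : RTree S) : Prop where
  root_mem : [] ∈ T.dom
  root_label : T.andLabel [] = A
  downward : ∀ w ∈ T.dom, ∀ v, v <+: w → v ∈ T.dom
  or_exists : ∀ w ∈ T.dom, w.length % 2 = 0 → ∀ i,
      ((w ++ [i]) ∈ T.dom ↔ ∃ c, P[i]? = some c ∧ ∃ θ, IsMGM S θ c.head (T.andLabel w))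
  or_label : ∀ w ∈ T.dom, w.length % 2 = 0 → ∀ i, (w ++ [i]) ∈ T.dom →
      T.orLabel (w ++ [i]) = i
  and_exists : ∀ w ∈ T.dom, w.length % 2 = 0 → ∀ i, (w ++ [i]) ∈ T.dom →
      ∀ c, P[i]? = some c → ∀ j, ((w ++ [i, j]) ∈ T.dom ↔ j < c.body.length)
  and_label : ∀ w ∈ T.dom, w.length % 2 = 0 → ∀ i, (w ++ [i]) ∈ T.dom →
      ∀ c, P[i]? = some c → ∀ θ, IsMGM S θ c.head (T.andLabel w) →
      ∀ j B, c.body[j]? = some B → T.andLabel (w ++ [i, j]) = B.subst S θ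

/-- `T` contains a loop at and-nodes `w` and `v`:  `w` properly precedes `v`
    on a branch, the atoms `T(w)` and `T(v)` have the same predicate, and the
    parent or-nodes of `T(w)` and `T(v)` are given by the same clause. -/
def HasLoopAt (T : RTree S) (w v : List ℕ) : Prop :=
  w ∈ T.dom ∧ v ∈ T.dom ∧ w <+: v ∧ w ≠ v ∧ w ≠ [] ∧
  w.length % 2 = 0 ∧ v.length % 2 = 0 ∧
  (T.andLabel w).rootSym = (T.andLabel v).rootSym ∧
  T.orLabel w.dropLast = T.orLabel v.dropLast

/-- The loop at `(w,v)` is guarded by `(P(k), t)`: the parent or-nodes of the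
    loop are given by clause `k` and `t` is a recursive reducing subterm for
    `T(w) ▷ T(v)`. -/
def LoopGuardedBy (T : RTree S) (w v : List ℕ) (k : ℕ) (t : STree S) : Prop :=
  HasLoopAt S T w v ∧ T.orLabel w.dropLast = k ∧
  ∃ p, RecContractionAt S (T.andLabel w) (T.andLabel v) p ∧
       SubtermAt S (T.andLabel w) p t

/-- `GC2(T)`: every loop of `T` is guarded. -/
def GC2 (T : RTree S) : Prop :=
  ∀ w v, HasLoopAt S T w v → ∃ k t, LoopGuardedBy S T w v k t

/-- `w` is a leaf and-node of `T`. -/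
def IsLeafAndNode (T : RTree S) (w : List ℕ) : Prop :=
  w ∈ T.dom ∧ w.length % 2 = 0 ∧ ∀ i, (w ++ [i]) ∉ T.dom

/-- The tree transition `T → T_u` induced by the mgu `σ` of clause `P(k)`
    and the atom at the leaf and-node `u` of `T`: `σ` is applied to every
    and-node of `T` and branches are extended according to the
    rewriting-tree construction (so `T'` is the rewriting tree for `σ(A)`). -/
def TreeTransitionVia (P : Program S) (T : RTree S) (u : List ℕ) (k : ℕ)
    (σ : Subst S) (T' : RTree S) : Prop :=
  IsLeafAndNode S T u ∧
  (∃ c, P[k]? = some c ∧ IsMGU S σ c.head (T.andLabel u)) ∧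
  IsRewritingTree S P ((T.andLabel []).subst S σ) T' ∧
  ∀ v ∈ T.dom, v ∈ T'.dom ∧
    (v.length % 2 = 0 → T'.andLabel v = (T.andLabel v).subst S σ) ∧
    (v.length % 2 = 1 → T'.orLabel v = T.orLabel v)

/-- A derivation tree: a tree whose nodes carry rewriting trees, where for
    each child node `n` we record the leaf position `tpos n`, the clause
    `tcls n` and the mgu `tmgu n` of the tree transition producing it. -/
structure DTree (S : Signature) where
  dom : Set (List ℕ)
  rt : List ℕ → RTree S
  tpos : List ℕ → List ℕ
  tcls : List ℕ → ℕ
  tmgu : List ℕ → Subst S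

/-- `D` is the derivation tree for `P` and `A`: its root is the rewriting
    tree for `P` and `A`, each child arises by a tree transition, and every
    possible tree transition is represented by a child. -/
structure IsDerivationTree (P : Program S) (A : STree S) (D : DTree S) : Prop where
  root_mem : [] ∈ D.dom
  root_rt : IsRewritingTree S P A (D.rt [])
  downward : ∀ w ∈ D.dom, ∀ v, v <+: w → v ∈ D.dom
  child_trans : ∀ w ∈ D.dom, ∀ i, (w ++ [i]) ∈ D.dom →
      TreeTransitionVia S P (D.rt w) (D.tpos (w ++ [i])) (D.tcls (w ++ [i]))
        (D.tmgu (w ++ [i])) (D.rt (w ++ [i]))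
  complete : ∀ w ∈ D.dom, ∀ u k σ T', TreeTransitionVia S P (D.rt w) u k σ T' →
      ∃ i, (w ++ [i]) ∈ D.dom ∧ D.tpos (w ++ [i]) = u ∧ D.tcls (w ++ [i]) = k

/-- `D` is guarded: `GC2` holds at every node. -/
def DTreeGuarded (D : DTree S) : Prop := ∀ w ∈ D.dom, GC2 S (D.rt w)

/-- The clause projection `π(T′)` of the node `n` of the derivation tree `D`
    (for the transition from its parent `w` to `n = w ++ [i]`, induced by the
    mgu `σ = tmgu n` of clause `P(k)`, `k = tcls n`, and the atom `B` at the
    leaf `tpos n`):  all triples `(k, t, v)` where `t` is the subterm of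
    `head(P(k))` at position `v`, `σ(B) ▷ B` holds with some variable
    reducing subterm `t′`, and `t′` matches against `t` (`t′ = σ′(t)`). -/
def clauseProj (P : Program S) (D : DTree S) (n : List ℕ) :
    Set (ℕ × STree S × List ℕ) :=
  { x | ∃ w i, n = w ++ [i] ∧ w ∈ D.dom ∧ n ∈ D.dom ∧
        x.1 = D.tcls n ∧
        (∃ c, P[x.1]? = some c ∧ SubtermAt S c.head x.2.2 x.2.1) ∧
        (∃ p t', VarContractionAt S
              (((D.rt w).andLabel (D.tpos n)).subst S (D.tmgu n))
              ((D.rt w).andLabel (D.tpos n)) p ∧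
            SubtermAt S (((D.rt w).andLabel (D.tpos n)).subst S (D.tmgu n)) p t' ∧
            ∃ σ', x.2.1.subst S σ' = t') }

/-- The coinductive invariant `ci(T′)` at node `n` of `D`: the subset of the
    clause projection consisting of those `(k, t, v)` such that the branch of
    the parent tree from its root to the leaf `tpos n` contains a loop
    guarded by `(P(k), t″)` with `t″ = θ(t)` for some `θ`. -/
def coInv (P : Program S) (D : DTree S) (n : List ℕ) :
    Set (ℕ × STree S × List ℕ) :=
  { x | x ∈ clauseProj S P D n ∧
        ∃ w i, n = w ++ [i] ∧ w ∈ D.dom ∧ n ∈ D.dom ∧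
        ∃ a b, a <+: D.tpos n ∧ b <+: D.tpos n ∧
          ∃ t'' θ, x.2.1.subst S θ = t'' ∧
            LoopGuardedBy S (D.rt w) a b x.1 t'' }

/-- The clause projection set `cproj(D)`. -/
def cproj (P : Program S) (D : DTree S) : Set (ℕ × STree S × List ℕ) :=
  ⋃ n ∈ D.dom, clauseProj S P D n

/-- The coinductive invariant set `cinv(D)`. -/
def cinv (P : Program S) (D : DTree S) : Set (ℕ × STree S × List ℕ) :=
  ⋃ n ∈ D.dom, coInv S P D n

/-- The guarded transition `D(v) ⟹ D(w)`: `v` properly precedes `w` on a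
    branch of `D` and `ci(D(v)) = ci(D(w)) ≠ ∅`. -/
def GuardedTransition (P : Program S) (D : DTree S) (v w : List ℕ) : Prop :=
  v ∈ D.dom ∧ w ∈ D.dom ∧ v <+: w ∧ v ≠ w ∧
  coInv S P D v = coInv S P D w ∧ coInv S P D v ≠ ∅

/-- `domO` is (the set of nodes of) the observation subtree of the derivation
    tree `D`: it has the same root, and the children in `D` of a node `w` of
    the subtree are kept unless the branch is truncated at `w` because the
    rewriting tree `D(w)` is unguarded or a guarded transition `D(v) ⟹ D(w)`
    has been reached; in either case `w` is a leaf of the subtree. -/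
structure IsObservationSubtree (P : Program S) (D : DTree S)
    (domO : Set (List ℕ)) : Prop where
  root_mem : [] ∈ domO
  sub : domO ⊆ D.dom
  downward : ∀ w ∈ domO, ∀ v, v <+: w → v ∈ domO
  children : ∀ w ∈ domO, ∀ i, (w ++ [i]) ∈ D.dom →
      ((w ++ [i]) ∈ domO ↔
        (GC2 S (D.rt w) ∧ ¬ ∃ v, GuardedTransition S P D v w))

/-- The observation subtree is guarded if all its rewriting trees satisfy
    `GC2` (otherwise a branch was truncated by an unguarded tree and it is
    unguarded). -/
def ObsGuarded (P : Program S) (D : DTree S) (domO : Set (List ℕ)) : Prop :=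
  ∀ w ∈ domO, GC2 S (D.rt w)

/-- The clause `P(i)` is guarded: the observation subtree of the derivation
    tree for `P` and `head(P(i))` is guarded. -/
def ClauseGuarded (P : Program S) (i : ℕ) : Prop :=
  ∀ c, P[i]? = some c → ∀ D domO, IsDerivationTree S P c.head D →
    IsObservationSubtree S P D domO → ObsGuarded S P D domO

/-- `GC3(P)`: every clause of `P` is guarded. -/
def GC3 (P : Program S) : Prop := ∀ i, i < P.length → ClauseGuarded S P i

/-- `P` is universally observable: for every atom `A` the rewriting tree
    for `P` and `A` is finite. -/
def UniversallyObservable (P : Program S) : Prop :=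
  ∀ A T, IsAtomTree S A → IsRewritingTree S P A T → T.dom.Finite

/-- The node at depth `n` of the infinite branch determined by the choice
    function `g`. -/
def branchNode (g : ℕ → ℕ) (n : ℕ) : List ℕ := List.ofFn (fun i : Fin n => g i)

/-- A tree language has an infinite branch. -/
def HasInfiniteBranch (dom : Set (List ℕ)) : Prop :=
  ∃ g : ℕ → ℕ, ∀ n, branchNode g n ∈ dom

/-- `P` is existentially live: some S-resolution derivation for `P` and some
    atom `A` is live, i.e. constitutes an infinite branch of the derivation
    tree for `P` and `A`. -/
def ExistentiallyLive (P : Program S) : Prop :=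
  ∃ A D, IsAtomTree S A ∧ IsDerivationTree S P A D ∧ HasInfiniteBranch D.dom

/-- `P` is observationally productive: universally observable and
    existentially live. -/
def ObservationallyProductive (P : Program S) : Prop :=
  UniversallyObservable S P ∧ ExistentiallyLive S P

/-- The signature for the program `P₇`: a unary function symbol `s` and two
4-ary predicate symbols `p` (coded `true`) and `q` (coded `false`). -/
def sigP7 : Signature where
  Fn := Unit
  fnFinite := inferInstance
  fnArity := fun _ => 1
  Pred := Bool
  predFinite := inferInstance
  predArity := fun _ => 4

/-- The variable `Xₙ`. -/
def v7 (n : ℕ) : STree sigP7 := .node (.var n) []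

/-- The term `s(t)`. -/
def s7 (t : STree sigP7) : STree sigP7 := .node (.fn ()) [t]

/-- The head `p(s(X1),X2,Y1,Y2)` of clause 0 (variables coded `0,1,2,3`). -/
def head7p : STree sigP7 := .node (.pred true) [s7 (v7 0), v7 1, v7 2, v7 3]

/-- The body atom `q(X2,X2,Y1,Y2)` of clause 0. -/
def body7p : STree sigP7 := .node (.pred false) [v7 1, v7 1, v7 2, v7 3]

/-- The head `q(X1,X2,s(Y1),Y2)` of clause 1. -/
def head7q : STree sigP7 := .node (.pred false) [v7 0, v7 1, s7 (v7 2), v7 3]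

/-- The body atom `p(X1,X2,Y2,Y2)` of clause 1. -/
def body7q : STree sigP7 := .node (.pred true) [v7 0, v7 1, v7 3, v7 3]

/-- The program `P₇`. -/
def prog7 : Program sigP7 := [⟨head7p, [body7p]⟩, ⟨head7q, [body7q]⟩]

/-- The atom `p(s(X1),s(X2),s(Y1),s(Y2))`. -/
def badAtom7 : STree sigP7 :=
  .node (.pred true) [s7 (v7 0), s7 (v7 1), s7 (v7 2), s7 (v7 3)]

/-! ### Matching the clause heads of `P₇` -/

/-- The atom `p(s(Xᵢ),s(X₁),s(Xⱼ),s(X₃))` (for `b = true`) or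
`q(s(Xᵢ),s(X₁),s(Xⱼ),s(X₃))` (for `b = false`), variables being numbered from `0`. All atoms
rewritten from `badAtom7` have this shape. -/
def branchAtom (b : Bool) (i j : ℕ) : STree sigP7 :=
  .node (.pred b) [s7 (v7 i), s7 (v7 1), s7 (v7 j), s7 (v7 3)]

theorem isMatcher_head7p {θ : Subst sigP7} {b : Bool} {x y z u : STree sigP7} :
    IsMatcher sigP7 θ head7p (.node (.pred b) [x, y, z, u]) ↔
      b = true ∧ s7 (θ 0) = x ∧ θ 1 = y ∧ θ 2 = z ∧ θ 3 = u := by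
  simp [IsMatcher, head7p, s7, v7, STree.subst, substList, eq_comm]
  intros
  exact ⟨Sym.pred.inj, congrArg _⟩

theorem isMatcher_head7q {θ : Subst sigP7} {b : Bool} {x y z u : STree sigP7} :
    IsMatcher sigP7 θ head7q (.node (.pred b) [x, y, z, u]) ↔
      b = false ∧ θ 0 = x ∧ θ 1 = y ∧ s7 (θ 2) = z ∧ θ 3 = u := by
  simp [IsMatcher, head7q, s7, v7, STree.subst, substList, eq_comm]
  intros
  exact ⟨Sym.pred.inj, congrArg _⟩

/-- The substitution sending the variables `0,1,2,3` to `x,y,z,u` and fixing all others. -/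
def subst4 (x y z u : STree sigP7) : Subst sigP7
  | 0 => x
  | 1 => y
  | 2 => z
  | 3 => u
  | n + 4 => v7 (n + 4)

/-- If `x,y,z,u` only contain the variables `0,1,2,3`, then every substitution agreeing with
`subst4 x y z u` on these variables factors through it. This is how matchers are seen to be
most general: the factor fixes `0,1,2,3` and is the given substitution elsewhere. -/
theorem subst4_mostGeneral {x y z u : STree sigP7}
    (h : ∀ ρ : Subst sigP7, ρ 0 = v7 0 → ρ 1 = v7 1 → ρ 2 = v7 2 → ρ 3 = v7 3 →
      x.subst sigP7 ρ = x ∧ y.subst sigP7 ρ = y ∧ z.subst sigP7 ρ = z ∧ u.subst sigP7 ρ = u)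
    (τ : Subst sigP7) (h0 : τ 0 = x) (h1 : τ 1 = y) (h2 : τ 2 = z) (h3 : τ 3 = u) :
    ∃ ρ, τ = Subst.comp sigP7 ρ (subst4 x y z u) := by
  obtain ⟨hx, hy, hz, hu⟩ :=
    h (fun n => if n < 4 then v7 n else τ n) (by simp) (by simp) (by simp) (by simp)
  refine ⟨fun n => if n < 4 then v7 n else τ n, ?_⟩
  funext n
  match n with
  | 0 => exact h0.trans hx.symm
  | 1 => exact h1.trans hy.symm
  | 2 => exact h2.trans hz.symm
  | 3 => exact h3.trans hu.symm
  | n + 4 => simp [Subst.comp, subst4, v7, STree.subst]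

/-- A substitution fixing the variables `0,1,2,3` fixes every variable below `4`. -/
theorem fix_of_lt {ρ : Subst sigP7} (h0 : ρ 0 = v7 0) (h1 : ρ 1 = v7 1) (h2 : ρ 2 = v7 2)
    (h3 : ρ 3 = v7 3) {i : ℕ} (hi : i < 4) : ρ i = v7 i := by
  interval_cases i <;> assumption

theorem exists_isMGM_head7p {i j : ℕ} (hi : i < 4) (hj : j < 4) :
    ∃ θ, IsMGM sigP7 θ head7p (branchAtom true i j) := by
  refine ⟨subst4 (v7 i) (s7 (v7 1)) (s7 (v7 j)) (s7 (v7 3)), ?_, fun τ hτ => ?_⟩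
  · exact isMatcher_head7p.2 ⟨rfl, rfl, rfl, rfl, rfl⟩
  · obtain ⟨-, h0, h1, h2, h3⟩ := isMatcher_head7p.1 hτ
    refine subst4_mostGeneral (fun ρ r0 r1 r2 r3 => ?_) τ (by simpa [s7] using h0) h1 h2 h3
    have ri := fix_of_lt r0 r1 r2 r3 hi
    have rj := fix_of_lt r0 r1 r2 r3 hj
    simp only [v7] at *
    simp [s7, STree.subst, substList, *]

theorem exists_isMGM_head7q {i j : ℕ} (hi : i < 4) (hj : j < 4) :
    ∃ θ, IsMGM sigP7 θ head7q (branchAtom false i j) := by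
  refine ⟨subst4 (s7 (v7 i)) (s7 (v7 1)) (v7 j) (s7 (v7 3)), ?_, fun τ hτ => ?_⟩
  · exact isMatcher_head7q.2 ⟨rfl, rfl, rfl, rfl, rfl⟩
  · obtain ⟨-, h0, h1, h2, h3⟩ := isMatcher_head7q.1 hτ
    refine subst4_mostGeneral (fun ρ r0 r1 r2 r3 => ?_) τ h0 h1 (by simpa [s7] using h2) h3
    have ri := fix_of_lt r0 r1 r2 r3 hi
    have rj := fix_of_lt r0 r1 r2 r3 hj
    simp only [v7] at *
    simp [s7, STree.subst, substList, *]

theorem prog7_getElem? {k : ℕ} {c : Clause sigP7} :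
    prog7[k]? = some c ↔
      (k = 0 ∧ c = ⟨head7p, [body7p]⟩) ∨ (k = 1 ∧ c = ⟨head7q, [body7q]⟩) := by
  match k with
  | 0 => simp [prog7, eq_comm]
  | 1 => simp [prog7, eq_comm]
  | k + 2 => simp [prog7]

/-- Exactly one clause of `P₇` matches an atom `branchAtom b i j`. -/
theorem clause_matches_iff {b : Bool} {i j : ℕ} (hi : i < 4) (hj : j < 4) (k : ℕ) :
    (∃ c, prog7[k]? = some c ∧ ∃ θ, IsMGM sigP7 θ c.head (branchAtom b i j)) ↔
      k = if b then 0 else 1 := by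
  constructor
  · rintro ⟨c, hc, θ, hθ⟩
    rcases prog7_getElem?.1 hc with ⟨rfl, rfl⟩ | ⟨rfl, rfl⟩
    · simp [(isMatcher_head7p.1 hθ.1).1]
    · simp [(isMatcher_head7q.1 hθ.1).1]
  · rintro rfl
    cases b
    · exact ⟨_, prog7_getElem?.2 (.inr ⟨rfl, rfl⟩), exists_isMGM_head7q hi hj⟩
    · exact ⟨_, prog7_getElem?.2 (.inl ⟨rfl, rfl⟩), exists_isMGM_head7p hi hj⟩

/-- One rewriting step on an atom `branchAtom b i j`. -/
theorem rewrite_branchAtom {b : Bool} {i j k l : ℕ} {c : Clause sigP7} {θ : Subst sigP7}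
    {B : STree sigP7} (hc : prog7[k]? = some c)
    (hθ : IsMGM sigP7 θ c.head (branchAtom b i j)) (hB : c.body[l]? = some B) :
    B.subst sigP7 θ = if b then branchAtom false 1 j else branchAtom true i 3 := by
  rcases prog7_getElem?.1 hc with ⟨rfl, rfl⟩ | ⟨rfl, rfl⟩
  · obtain ⟨rfl, -, h1, h2, h3⟩ := isMatcher_head7p.1 hθ.1
    obtain ⟨-, rfl⟩ : l = 0 ∧ body7p = B := by
      cases l <;> simp_all
    simp [body7p, branchAtom, v7, STree.subst, substList, h1, h2, h3]
  · obtain ⟨rfl, h0, h1, -, h3⟩ := isMatcher_head7q.1 hθ.1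
    obtain ⟨-, rfl⟩ : l = 0 ∧ body7q = B := by
      cases l <;> simp_all
    simp [body7q, branchAtom, v7, STree.subst, substList, h0, h1, h3]

/-! ### Infinite rewriting from `badAtom7` -/

/-- The `m`-th and-node label on the infinite branch of the rewriting tree for `badAtom7`.
It is periodic of period `2` from `m = 2` on. -/
def branchLabel (m : ℕ) : STree sigP7 :=
  branchAtom (m % 2 == 0) (if m = 0 then 0 else 1) (if m ≤ 1 then 2 else 3)

theorem branchLabel_clause_matches_iff (m k : ℕ) :
    (∃ c, prog7[k]? = some c ∧ ∃ θ, IsMGM sigP7 θ c.head (branchLabel m)) ↔ k = m % 2 := by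
  rw [branchLabel, clause_matches_iff (by split <;> simp) (by split <;> simp)]
  rcases Nat.mod_two_eq_zero_or_one m with h | h <;> simp [h]

theorem rewrite_branchLabel {m k l : ℕ} {c : Clause sigP7} {θ : Subst sigP7}
    {B : STree sigP7} (hc : prog7[k]? = some c)
    (hθ : IsMGM sigP7 θ c.head (branchLabel m)) (hB : c.body[l]? = some B) :
    B.subst sigP7 θ = branchLabel (m + 1) := by
  rw [rewrite_branchAtom hc hθ hB, branchLabel]
  rcases Nat.mod_two_eq_zero_or_one m with h | h
  · have h' : (m + 1) % 2 = 1 := by omega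
    have : m ≤ 1 ↔ m = 0 := by omega
    simp [h, h', this]
  · have h' : (m + 1) % 2 = 0 := by omega
    have : m ≠ 0 := by omega
    simp [h, h', this]

/-- The clause bodies of `P₇` all have length one, so or-nodes have a single child. -/
theorem body_length {k : ℕ} {c : Clause sigP7} (hc : prog7[k]? = some c) :
    c.body.length = 1 := by
  rcases prog7_getElem?.1 hc with ⟨rfl, rfl⟩ | ⟨rfl, rfl⟩ <;> rfl

/-- Every rewriting tree for `badAtom7` has and-nodes at all even depths. -/
theorem exists_node {T : RTree sigP7} (hT : IsRewritingTree sigP7 prog7 badAtom7 T) (m : ℕ) :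
    ∃ w ∈ T.dom, w.length = 2 * m ∧ T.andLabel w = branchLabel m := by
  induction m with
  | zero => exact ⟨[], hT.root_mem, rfl, hT.root_label⟩
  | succ m ih =>
    obtain ⟨w, hw, hl, hA⟩ := ih
    have hev : w.length % 2 = 0 := by omega
    obtain ⟨c, hc, θ, hθ⟩ := (branchLabel_clause_matches_iff m _).2 rfl
    have hor : w ++ [m % 2] ∈ T.dom := (hT.or_exists w hw hev _).2 ⟨c, hc, θ, by rwa [hA]⟩
    have hlen := body_length hc
    have h0 : c.body[0]? = some c.body[0] := by simp [hlen]
    refine ⟨w ++ [m % 2, 0], (hT.and_exists w hw hev _ hor c hc 0).2 (by omega), ?_, ?_⟩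
    · simp [hl]; omega
    · rw [hT.and_label w hw hev _ hor c hc θ (by rwa [hA]) 0 _ h0,
        rewrite_branchLabel hc hθ h0]

/-- A rewriting tree for `badAtom7` contains nodes of unbounded length, hence is infinite. -/
theorem badAtom7_infinite {T : RTree sigP7} (hT : IsRewritingTree sigP7 prog7 badAtom7 T) :
    ¬ T.dom.Finite := by
  intro hfin
  obtain ⟨N, hN⟩ := (hfin.image List.length).bddAbove
  obtain ⟨w, hw, hl, -⟩ := exists_node hT (N + 1)
  have := hN ⟨w, hw, rfl⟩
  omega

/-! ### Existence of a rewriting tree for `badAtom7` -/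

/-- The child taken at depth `k` on the infinite branch: clauses `0` and `1` alternate at even
depth, and the only body atom (index `0`) is chosen at odd depth. -/
def branchDir (k : ℕ) : ℕ := if k % 4 = 2 then 1 else 0

/-- The rewriting tree for `badAtom7`: a single infinite branch. -/
def badTree : RTree sigP7 where
  dom := {w | ∀ k x, w[k]? = some x → x = branchDir k}
  andLabel w := branchLabel (w.length / 2)
  orLabel w := branchDir (w.length - 1)

theorem append_mem_badTree {w : List ℕ} (hw : w ∈ badTree.dom) (i : ℕ) :
    w ++ [i] ∈ badTree.dom ↔ i = branchDir w.length := by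
  constructor
  · intro h
    exact h w.length i (by simp)
  · rintro rfl k x hx
    rcases lt_trichotomy k w.length with h | rfl | h
    · exact hw k x (by rwa [List.getElem?_append_left h] at hx)
    · simpa [eq_comm] using hx
    · rw [List.getElem?_eq_none (by simpa using h)] at hx
      simp at hx

theorem isRewritingTree_badTree : IsRewritingTree sigP7 prog7 badAtom7 badTree where
  root_mem := by simp [badTree]
  root_label := rfl
  downward := by
    rintro _ hw v ⟨t, rfl⟩ k x hx
    refine hw k x ?_
    rw [List.getElem?_append_left (List.getElem?_eq_some_iff.1 hx).1, hx]
  or_exists w hw hev i := by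
    rw [append_mem_badTree hw]
    refine Iff.trans ?_ (branchLabel_clause_matches_iff (w.length / 2) i).symm
    have : branchDir w.length = w.length / 2 % 2 := by
      unfold branchDir; split <;> omega
    rw [this]
  or_label w hw hev i hi := by
    rw [append_mem_badTree hw] at hi
    simp [badTree, hi]
  and_exists w hw hev i hi c hc j := by
    have : branchDir (w.length + 1) = 0 := by
      unfold branchDir; split <;> omega
    rw [show w ++ [i, j] = (w ++ [i]) ++ [j] by simp, append_mem_badTree hi, body_length hc]
    simp [this]
  and_label w hw hev i hi c hc θ hθ j B hB := by
    rw [rewrite_branchLabel hc hθ hB]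
    simp [badTree]

theorem isAtomTree_badAtom7 : IsAtomTree sigP7 badAtom7 := by
  have hv : ∀ n, IsTermTree sigP7 (s7 (v7 n)) := fun n =>
    .fn _ _ (by simpa using .var n) rfl
  refine ⟨true, _, rfl, rfl, ?_⟩
  simp [hv]

/-! ### Absence of loops in the trees of the clause heads -/

/-- A loop needs two distinct nonempty and-nodes on a branch, hence a branch of length at
least four. -/
theorem not_hasLoopAt_of_depth {A : STree sigP7} {T : RTree sigP7}
    (hT : IsRewritingTree sigP7 prog7 A T) (h : ∀ a b c, [a, b, c] ∉ T.dom) (w v : List ℕ) :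
    ¬ HasLoopAt sigP7 T w v := by
  rintro ⟨-, hv, hpre, hne, hw0, hwe, hve, -⟩
  have hlt : w.length < v.length :=
    lt_of_le_of_ne hpre.length_le fun e => hne (hpre.eq_of_length e)
  have hpos := List.length_pos_iff.2 hw0
  match v, hv with
  | a :: b :: c :: t, hv => exact h a b c (hT.downward _ hv _ ⟨t, rfl⟩)
  | [], _ | [_], _ | [_, _], _ => simp at hlt hve; try omega

/-- If no clause head matches any atom obtained from `A` by one rewriting step, then the rewriting
tree for `A` has no or-nodes below its root's grandchildren. -/
theorem no_depth_three {A : STree sigP7} {T : RTree sigP7}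
    (hT : IsRewritingTree sigP7 prog7 A T)
    (h : ∀ (k : ℕ) (c : Clause sigP7) (θ : Subst sigP7) (k' : ℕ) (c' : Clause sigP7)
      (θ' : Subst sigP7) (l : ℕ) (B : STree sigP7), prog7[k]? = some c → IsMGM sigP7 θ c.head A →
      c.body[l]? = some B → prog7[k']? = some c' → ¬ IsMGM sigP7 θ' c'.head (B.subst sigP7 θ))
    (a b d : ℕ) : [a, b, d] ∉ T.dom := by
  intro h3
  have h2 : [a, b] ∈ T.dom := hT.downward _ h3 _ ⟨[d], rfl⟩
  have h1 : [a] ∈ T.dom := hT.downward _ h3 _ ⟨[b, d], rfl⟩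
  obtain ⟨c, hc, θ, hθ⟩ := (hT.or_exists [] hT.root_mem rfl a).1 h1
  have hb := (hT.and_exists [] hT.root_mem rfl a h1 c hc b).1 h2
  have hB : c.body[b]? = some c.body[b] := by simp [hb]
  have hlab := hT.and_label [] hT.root_mem rfl a h1 c hc θ hθ b _ hB
  obtain ⟨c', hc', θ', hθ'⟩ := (hT.or_exists [a, b] h2 (by simp) d).1 h3
  rw [hT.root_label] at hθ
  simp only [List.nil_append] at hlab
  rw [hlab] at hθ'
  exact h _ _ _ _ _ _ _ _ hc hθ hB hc' hθ'

theorem no_depth_three_head7p {T : RTree sigP7}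
    (hT : IsRewritingTree sigP7 prog7 head7p T) (a b d : ℕ) : [a, b, d] ∉ T.dom := by
  refine no_depth_three hT (fun k c θ k' c' θ' l B hc hθ hB hc' hθ' => ?_) a b d
  rcases prog7_getElem?.1 hc with ⟨rfl, rfl⟩ | ⟨rfl, rfl⟩
  · obtain ⟨-, -, h1, h2, h3⟩ := isMatcher_head7p.1 hθ.1
    obtain ⟨-, rfl⟩ : l = 0 ∧ body7p = B := by
      cases l <;> simp_all
    -- the atom is `q(X₂,X₂,Y₁,Y₂)`: clause 0 has the wrong predicate, clause 1 needs `s` at `Y₁`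
    have hatom : body7p.subst sigP7 θ = .node (.pred false) [v7 1, v7 1, v7 2, v7 3] := by
      rw [← h1, ← h2, ← h3]; rfl
    rw [hatom] at hθ'
    rcases prog7_getElem?.1 hc' with ⟨rfl, rfl⟩ | ⟨rfl, rfl⟩
    · simpa using (isMatcher_head7p.1 hθ'.1).1
    · simpa [s7, v7] using (isMatcher_head7q.1 hθ'.1).2.2.2.1
  · simpa using (isMatcher_head7q.1 hθ.1).1

theorem no_depth_three_head7q {T : RTree sigP7}
    (hT : IsRewritingTree sigP7 prog7 head7q T) (a b d : ℕ) : [a, b, d] ∉ T.dom := by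
  refine no_depth_three hT (fun k c θ k' c' θ' l B hc hθ hB hc' hθ' => ?_) a b d
  rcases prog7_getElem?.1 hc with ⟨rfl, rfl⟩ | ⟨rfl, rfl⟩
  · simpa using (isMatcher_head7p.1 hθ.1).1
  · obtain ⟨-, h0, h1, -, h3⟩ := isMatcher_head7q.1 hθ.1
    obtain ⟨-, rfl⟩ : l = 0 ∧ body7q = B := by
      cases l <;> simp_all
    -- the atom is `p(X₁,X₂,Y₂,Y₂)`: clause 0 needs `s` at `X₁`, clause 1 has the wrong predicate
    have hatom : body7q.subst sigP7 θ = .node (.pred true) [v7 0, v7 1, v7 3, v7 3] := by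
      rw [← h0, ← h1, ← h3]; rfl
    rw [hatom] at hθ'
    rcases prog7_getElem?.1 hc' with ⟨rfl, rfl⟩ | ⟨rfl, rfl⟩
    · simpa [s7, v7] using (isMatcher_head7p.1 hθ'.1).2.1
    · simpa using (isMatcher_head7q.1 hθ'.1).1

/-- Existential guardedness does not imply universal
guardedness.  For the two-clause program `P₇`, the rewriting trees for `P₇`
and each clause head contain no loops at all (hence are guarded), yet the
rewriting tree for `P₇` and the atom `p(s(X1),s(X2),s(Y1),s(Y2))` is
infinite; in particular `P₇` is not universally observable. -/
theorem existential_guardedness_not_universal :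
    (∀ T, IsRewritingTree sigP7 prog7 head7p T →
        ∀ w v, ¬ HasLoopAt sigP7 T w v) ∧
    (∀ T, IsRewritingTree sigP7 prog7 head7q T →
        ∀ w v, ¬ HasLoopAt sigP7 T w v) ∧
    (∀ T, IsRewritingTree sigP7 prog7 badAtom7 T → ¬ T.dom.Finite) ∧
    ¬ UniversallyObservable sigP7 prog7 := by
  refine ⟨fun T hT => not_hasLoopAt_of_depth hT (no_depth_three_head7p hT),
    fun T hT => not_hasLoopAt_of_depth hT (no_depth_three_head7q hT),
    fun T hT => badAtom7_infinite hT, fun h => ?_⟩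
  exact badAtom7_infinite isRewritingTree_badTree
    (h badAtom7 badTree isAtomTree_badAtom7 isRewritingTree_badTree)

end LPProd
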